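/- arXiv:2411.01413 — 5 statements merged into one kernel-verified Lean document; each statement's English description precedes it below -/
import Mathlib

section
/- Let (g, [·,·,·], ε, α, β) be a multiplicative 3-BiHom-Lie color algebra with α, β bijective, let (V, ρ, α_V, β_V) be a representation of g with α_V, β_V bijective, and let T : V → g be a Kupershmidt operator associated with (V, ρ, α_V, β_V). Then V carries a 3-BiHom-pre-Lie color algebra structure (V, {·,·,·}_V, ε, α_V, β_V) given by {u,v,w}_V = ρ(T(u), T(v))w for all homogeneous u,v,w ∈ V. -/
/-- A skew-symmetric bicharacter (commutation factor) on an abelian group `Γ`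
with values in `K \ {0}` (nonvanishing is a consequence of `skew`). -/
structure Bicharacter (K : Type*) (Γ : Type*) [Field K] [AddCommGroup Γ] where
  ε : Γ → Γ → K
  skew : ∀ a b, ε a b * ε b a = 1
  add_right : ∀ a b c, ε a (b + c) = ε a b * ε a c
  add_left : ∀ a b c, ε (a + b) c = ε a c * ε b c

variable {K : Type*} [Field K] {Γ : Type*} [AddCommGroup Γ]
variable {g : Type*} [AddCommGroup g] [Module K g]
variable {V : Type*} [AddCommGroup V] [Module K V]

/-- A (multiplicative) BiHom-associative color algebra structure on a `Γ`-graded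
vector space, all identities being required on homogeneous elements. -/
structure IsBiHomAssocColor (𝒜 : Γ → Submodule K g) (χ : Bicharacter K Γ)
    (μ : g →ₗ[K] g →ₗ[K] g) (α β : g →ₗ[K] g) : Prop where
  mu_even : ∀ a b, ∀ x ∈ 𝒜 a, ∀ y ∈ 𝒜 b, μ x y ∈ 𝒜 (a + b)
  alpha_even : ∀ a, ∀ x ∈ 𝒜 a, α x ∈ 𝒜 a
  beta_even : ∀ a, ∀ x ∈ 𝒜 a, β x ∈ 𝒜 a
  comm : ∀ x, α (β x) = β (α x)
  mult_alpha : ∀ a b, ∀ x ∈ 𝒜 a, ∀ y ∈ 𝒜 b, μ (α x) (α y) = α (μ x y)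
  mult_beta : ∀ a b, ∀ x ∈ 𝒜 a, ∀ y ∈ 𝒜 b, μ (β x) (β y) = β (μ x y)
  assoc : ∀ a b c, ∀ x ∈ 𝒜 a, ∀ y ∈ 𝒜 b, ∀ z ∈ 𝒜 c,
    μ (α x) (μ y z) = μ (μ x y) (β z)

/-- A bimodule (representation) of a BiHom-associative color algebra. -/
structure IsAssocColorBimodule (𝒜 : Γ → Submodule K g) (𝒱 : Γ → Submodule K V)
    (χ : Bicharacter K Γ) (μ : g →ₗ[K] g →ₗ[K] g) (α β : g →ₗ[K] g)
    (l r : g →ₗ[K] V →ₗ[K] V) (αV βV : V →ₗ[K] V) : Prop where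
  l_even : ∀ a b, ∀ x ∈ 𝒜 a, ∀ v ∈ 𝒱 b, l x v ∈ 𝒱 (a + b)
  r_even : ∀ a b, ∀ x ∈ 𝒜 a, ∀ v ∈ 𝒱 b, r x v ∈ 𝒱 (a + b)
  alphaV_even : ∀ a, ∀ v ∈ 𝒱 a, αV v ∈ 𝒱 a
  betaV_even : ∀ a, ∀ v ∈ 𝒱 a, βV v ∈ 𝒱 a
  commV : ∀ v, αV (βV v) = βV (αV v)
  alphaV_l : ∀ a b, ∀ x ∈ 𝒜 a, ∀ v ∈ 𝒱 b, αV (l x v) = l (α x) (αV v)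
  betaV_l : ∀ a b, ∀ x ∈ 𝒜 a, ∀ v ∈ 𝒱 b, βV (l x v) = l (β x) (βV v)
  alphaV_r : ∀ a b, ∀ x ∈ 𝒜 a, ∀ v ∈ 𝒱 b, αV (r x v) = r (α x) (αV v)
  betaV_r : ∀ a b, ∀ x ∈ 𝒜 a, ∀ v ∈ 𝒱 b, βV (r x v) = r (β x) (βV v)
  l_mu : ∀ a b c, ∀ x ∈ 𝒜 a, ∀ y ∈ 𝒜 b, ∀ v ∈ 𝒱 c,
    l (α x) (l y v) = l (μ x y) (βV v)
  l_r : ∀ a b c, ∀ x ∈ 𝒜 a, ∀ y ∈ 𝒜 b, ∀ v ∈ 𝒱 c,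
    l (α x) (r y v) = χ.ε a b • r (β y) (l x v)
  r_mu : ∀ a b c, ∀ x ∈ 𝒜 a, ∀ y ∈ 𝒜 b, ∀ v ∈ 𝒱 c,
    r (μ x y) (αV v) = χ.ε a b • r (β y) (r x v)

/-- A 3-BiHom-Lie color algebra structure. -/
structure Is3BiHomLieColor (𝒜 : Γ → Submodule K g) (χ : Bicharacter K Γ)
    (m : g →ₗ[K] g →ₗ[K] g →ₗ[K] g) (α β : g →ₗ[K] g) : Prop where
  bracket_even : ∀ a b c, ∀ x ∈ 𝒜 a, ∀ y ∈ 𝒜 b, ∀ z ∈ 𝒜 c, m x y z ∈ 𝒜 (a + b + c)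
  alpha_even : ∀ a, ∀ x ∈ 𝒜 a, α x ∈ 𝒜 a
  beta_even : ∀ a, ∀ x ∈ 𝒜 a, β x ∈ 𝒜 a
  skew1 : ∀ a b c, ∀ x ∈ 𝒜 a, ∀ y ∈ 𝒜 b, ∀ z ∈ 𝒜 c,
    m (β x) (β y) (α z) = -(χ.ε a b • m (β y) (β x) (α z))
  skew2 : ∀ a b c, ∀ x ∈ 𝒜 a, ∀ y ∈ 𝒜 b, ∀ z ∈ 𝒜 c,
    m (β x) (β y) (α z) = -(χ.ε b c • m (β x) (β z) (α y))
  jacobi : ∀ a b c d e, ∀ x ∈ 𝒜 a, ∀ y ∈ 𝒜 b, ∀ z ∈ 𝒜 c, ∀ u ∈ 𝒜 d, ∀ v ∈ 𝒜 e,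
    m (β (β x)) (β (β y)) (m (β z) (β u) (α v))
      = χ.ε (a + b + c) (d + e) • m (β (β u)) (β (β v)) (m (β x) (β y) (α z))
        - (χ.ε (a + b) (c + e) * χ.ε d e) • m (β (β z)) (β (β v)) (m (β x) (β y) (α u))
        + χ.ε (a + b) (c + d) • m (β (β z)) (β (β u)) (m (β x) (β y) (α v))

/-- A multiplicative 3-BiHom-Lie color algebra structure. -/
structure IsMult3BiHomLieColor (𝒜 : Γ → Submodule K g) (χ : Bicharacter K Γ)
    (m : g →ₗ[K] g →ₗ[K] g →ₗ[K] g) (α β : g →ₗ[K] g)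
    extends Is3BiHomLieColor 𝒜 χ m α β : Prop where
  comm : ∀ x, α (β x) = β (α x)
  mult_alpha : ∀ a b c, ∀ x ∈ 𝒜 a, ∀ y ∈ 𝒜 b, ∀ z ∈ 𝒜 c,
    α (m x y z) = m (α x) (α y) (α z)
  mult_beta : ∀ a b c, ∀ x ∈ 𝒜 a, ∀ y ∈ 𝒜 b, ∀ z ∈ 𝒜 c,
    β (m x y z) = m (β x) (β y) (β z)

/-- A 3-Lie color algebra structure (`α = β = id` case), with the
ε-fundamental identity. -/
structure Is3LieColor (𝒜 : Γ → Submodule K g) (χ : Bicharacter K Γ)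
    (m : g →ₗ[K] g →ₗ[K] g →ₗ[K] g) : Prop where
  bracket_even : ∀ a b c, ∀ x ∈ 𝒜 a, ∀ y ∈ 𝒜 b, ∀ z ∈ 𝒜 c, m x y z ∈ 𝒜 (a + b + c)
  skew1 : ∀ a b c, ∀ x ∈ 𝒜 a, ∀ y ∈ 𝒜 b, ∀ z ∈ 𝒜 c,
    m x y z = -(χ.ε a b • m y x z)
  skew2 : ∀ a b c, ∀ x ∈ 𝒜 a, ∀ y ∈ 𝒜 b, ∀ z ∈ 𝒜 c,
    m x y z = -(χ.ε b c • m x z y)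
  fund : ∀ a b c d e, ∀ x ∈ 𝒜 a, ∀ y ∈ 𝒜 b, ∀ z ∈ 𝒜 c, ∀ t ∈ 𝒜 d, ∀ u ∈ 𝒜 e,
    m x y (m z t u)
      = m (m x y z) t u + χ.ε (a + b) c • m z (m x y t) u
        + χ.ε (a + b) (c + d) • m z t (m x y u)

/-- A representation of a 3-BiHom-Lie color algebra on a graded vector space `V`. -/
structure Is3BiHomLieRep (𝒜 : Γ → Submodule K g) (𝒱 : Γ → Submodule K V)
    (χ : Bicharacter K Γ) (m : g →ₗ[K] g →ₗ[K] g →ₗ[K] g) (α β : g →ₗ[K] g)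
    (ρ : g →ₗ[K] g →ₗ[K] V →ₗ[K] V) (αV βV : V →ₗ[K] V) : Prop where
  commV : ∀ v, αV (βV v) = βV (αV v)
  rho_even : ∀ a b c, ∀ x ∈ 𝒜 a, ∀ y ∈ 𝒜 b, ∀ v ∈ 𝒱 c, ρ x y v ∈ 𝒱 (a + b + c)
  alphaV_even : ∀ a, ∀ v ∈ 𝒱 a, αV v ∈ 𝒱 a
  betaV_even : ∀ a, ∀ v ∈ 𝒱 a, βV v ∈ 𝒱 a
  rho_skew : ∀ a b, ∀ x ∈ 𝒜 a, ∀ y ∈ 𝒜 b, ρ x y = -(χ.ε a b • ρ y x)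
  cond1 : ∀ a b, ∀ u ∈ 𝒜 a, ∀ v ∈ 𝒜 b,
    ρ (α u) (α v) ∘ₗ αV = αV ∘ₗ ρ u v
  cond2 : ∀ a b, ∀ u ∈ 𝒜 a, ∀ v ∈ 𝒜 b,
    ρ (β u) (β v) ∘ₗ βV = βV ∘ₗ ρ u v
  cond3 : ∀ a b c d, ∀ u ∈ 𝒜 a, ∀ v ∈ 𝒜 b, ∀ x ∈ 𝒜 c, ∀ y ∈ 𝒜 d,
    ρ (α (β u)) (α (β v)) ∘ₗ ρ x y
      = χ.ε (c + d) (a + b) • (ρ (β x) (β y) ∘ₗ ρ (α u) (α v))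
        + ρ (m (β u) (β v) x) (β y) ∘ₗ βV
        + χ.ε c (a + b) • (ρ (β x) (m (β u) (β v) y) ∘ₗ βV)
  cond4 : ∀ a b c d, ∀ u ∈ 𝒜 a, ∀ v ∈ 𝒜 b, ∀ x ∈ 𝒜 c, ∀ y ∈ 𝒜 d,
    ρ (m (β u) (β v) x) (β y) ∘ₗ βV
      = χ.ε a (c + b) • (ρ (α (β v)) (β x) ∘ₗ ρ (α u) y)
        + χ.ε c (a + b) • (ρ (β x) (α (β u)) ∘ₗ ρ (α v) y)
        + ρ (α (β u)) (α (β v)) ∘ₗ ρ x y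

/-- A noncommutative 3-BiHom-Poisson color algebra structure. -/
structure IsNC3BiHomPoissonColor (𝒜 : Γ → Submodule K g) (χ : Bicharacter K Γ)
    (m : g →ₗ[K] g →ₗ[K] g →ₗ[K] g) (μ : g →ₗ[K] g →ₗ[K] g)
    (α β : g →ₗ[K] g) : Prop where
  assoc : IsBiHomAssocColor 𝒜 χ μ α β
  lie : Is3BiHomLieColor 𝒜 χ m α β
  leibniz : ∀ a b c d, ∀ x ∈ 𝒜 a, ∀ y ∈ 𝒜 b, ∀ z ∈ 𝒜 c, ∀ t ∈ 𝒜 d,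
    m (α (β x)) (α (β y)) (μ z t)
      = μ (m (β x) (β y) z) (β t) + χ.ε (a + b) c • μ (β z) (m (α x) (α y) t)

/-- A representation of a noncommutative 3-BiHom-Poisson color algebra. -/
structure IsNC3BiHomPoissonRep (𝒜 : Γ → Submodule K g) (𝒱 : Γ → Submodule K V)
    (χ : Bicharacter K Γ) (m : g →ₗ[K] g →ₗ[K] g →ₗ[K] g) (μ : g →ₗ[K] g →ₗ[K] g)
    (α β : g →ₗ[K] g) (ρ : g →ₗ[K] g →ₗ[K] V →ₗ[K] V)
    (l r : g →ₗ[K] V →ₗ[K] V) (αV βV : V →ₗ[K] V) : Prop where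
  bimod : IsAssocColorBimodule 𝒜 𝒱 χ μ α β l r αV βV
  lierep : Is3BiHomLieRep 𝒜 𝒱 χ m α β ρ αV βV
  comp1 : ∀ a b c, ∀ x ∈ 𝒜 a, ∀ y ∈ 𝒜 b, ∀ z ∈ 𝒜 c,
    ρ (α (β x)) (α (β y)) ∘ₗ l z
      = l (m (β x) (β y) z) ∘ₗ βV + χ.ε (a + b) c • (l (β z) ∘ₗ ρ (α x) (α y))
  comp2 : ∀ a b c, ∀ x ∈ 𝒜 a, ∀ y ∈ 𝒜 b, ∀ z ∈ 𝒜 c,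
    ρ (α (β x)) (α (β y)) ∘ₗ r z
      = χ.ε (a + b) c • (r (β z) ∘ₗ ρ (β x) (β y)) + r (m (α x) (α y) z) ∘ₗ βV
  comp3 : ∀ a b c, ∀ x ∈ 𝒜 a, ∀ y ∈ 𝒜 b, ∀ z ∈ 𝒜 c,
    ρ (α (β x)) (μ (β y) (β z)) ∘ₗ (αV ∘ₗ αV ∘ₗ βV)
      = χ.ε (a + b) c • (r (α (β z)) ∘ₗ ρ x (β (β y)) ∘ₗ (αV ∘ₗ βV))
        + χ.ε a b • (l (α (β y)) ∘ₗ ρ (α x) (β z) ∘ₗ (αV ∘ₗ αV))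

/-- The 3-BiHom-ε-commutator of a ternary product, on homogeneous elements of
degrees `a`, `b`, `c`. -/
def preC (χ : Bicharacter K Γ) (m : g →ₗ[K] g →ₗ[K] g →ₗ[K] g)
    (α β : g ≃ₗ[K] g) (a b c : Γ) (x y z : g) : g :=
  m x y z - χ.ε b c • m x (β (α.symm z)) (α (β.symm y))
    + χ.ε a (b + c) • m y (β (α.symm z)) (α (β.symm x))

/-- A 3-BiHom-pre-Lie color algebra structure (with bijective structure maps). -/
structure Is3BiHomPreLieColor (𝒜 : Γ → Submodule K g) (χ : Bicharacter K Γ)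
    (m : g →ₗ[K] g →ₗ[K] g →ₗ[K] g) (α β : g ≃ₗ[K] g) : Prop where
  bracket_even : ∀ a b c, ∀ x ∈ 𝒜 a, ∀ y ∈ 𝒜 b, ∀ z ∈ 𝒜 c, m x y z ∈ 𝒜 (a + b + c)
  alpha_even : ∀ a, ∀ x ∈ 𝒜 a, α x ∈ 𝒜 a
  beta_even : ∀ a, ∀ x ∈ 𝒜 a, β x ∈ 𝒜 a
  comm : ∀ x, α (β x) = β (α x)
  mult_alpha : ∀ a b c, ∀ x ∈ 𝒜 a, ∀ y ∈ 𝒜 b, ∀ z ∈ 𝒜 c,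
    α (m x y z) = m (α x) (α y) (α z)
  mult_beta : ∀ a b c, ∀ x ∈ 𝒜 a, ∀ y ∈ 𝒜 b, ∀ z ∈ 𝒜 c,
    β (m x y z) = m (β x) (β y) (β z)
  skew : ∀ a b c, ∀ x ∈ 𝒜 a, ∀ y ∈ 𝒜 b, ∀ z ∈ 𝒜 c,
    m (β x) (β y) (α z) = -(χ.ε a b • m (β y) (β x) (α z))
  identity3 : ∀ a₁ a₂ a₃ a₄ a₅, ∀ x₁ ∈ 𝒜 a₁, ∀ x₂ ∈ 𝒜 a₂, ∀ x₃ ∈ 𝒜 a₃,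
      ∀ x₄ ∈ 𝒜 a₄, ∀ x₅ ∈ 𝒜 a₅,
    m (α (β x₄)) (α (β x₅)) (m x₁ x₂ x₃)
      = m (preC χ m α β a₄ a₅ a₁ (β x₄) (β x₅) x₁) (β x₂) (β x₃)
        + χ.ε a₁ (a₄ + a₅) • m (β x₁) (preC χ m α β a₄ a₅ a₂ (β x₄) (β x₅) x₂) (β x₃)
        + χ.ε (a₁ + a₂) (a₄ + a₅) • m (β x₁) (β x₂) (m (α x₄) (α x₅) x₃)
  identity4 : ∀ a₁ a₂ a₃ a₄ a₅, ∀ x₁ ∈ 𝒜 a₁, ∀ x₂ ∈ 𝒜 a₂, ∀ x₃ ∈ 𝒜 a₃,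
      ∀ x₄ ∈ 𝒜 a₄, ∀ x₅ ∈ 𝒜 a₅,
    m (preC χ m α β a₄ a₅ a₁ (β x₄) (β x₅) x₁) (β x₂) (β x₃)
      = χ.ε a₄ (a₁ + a₅) • m (α (β x₅)) (β x₁) (m (α x₄) x₂ x₃)
        + χ.ε a₁ (a₄ + a₅) • m (β x₁) (α (β x₄)) (m (α x₅) x₂ x₃)
        + m (α (β x₄)) (α (β x₅)) (m x₁ x₂ x₃)

/-- A BiHom-dendriform color algebra structure. -/
structure IsBiHomDendriformColor (𝒜 : Γ → Submodule K g) (χ : Bicharacter K Γ)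
    (pl pr : g →ₗ[K] g →ₗ[K] g) (α β : g →ₗ[K] g) : Prop where
  pl_even : ∀ a b, ∀ x ∈ 𝒜 a, ∀ y ∈ 𝒜 b, pl x y ∈ 𝒜 (a + b)
  pr_even : ∀ a b, ∀ x ∈ 𝒜 a, ∀ y ∈ 𝒜 b, pr x y ∈ 𝒜 (a + b)
  alpha_even : ∀ a, ∀ x ∈ 𝒜 a, α x ∈ 𝒜 a
  beta_even : ∀ a, ∀ x ∈ 𝒜 a, β x ∈ 𝒜 a
  comm : ∀ x, α (β x) = β (α x)
  alpha_pl : ∀ a b, ∀ x ∈ 𝒜 a, ∀ y ∈ 𝒜 b, α (pl x y) = pl (α x) (α y)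
  beta_pl : ∀ a b, ∀ x ∈ 𝒜 a, ∀ y ∈ 𝒜 b, β (pl x y) = pl (β x) (β y)
  alpha_pr : ∀ a b, ∀ x ∈ 𝒜 a, ∀ y ∈ 𝒜 b, α (pr x y) = pr (α x) (α y)
  beta_pr : ∀ a b, ∀ x ∈ 𝒜 a, ∀ y ∈ 𝒜 b, β (pr x y) = pr (β x) (β y)
  ax1 : ∀ a b c, ∀ x ∈ 𝒜 a, ∀ y ∈ 𝒜 b, ∀ z ∈ 𝒜 c,
    pl (pl x y) (β z) = pl (α x) (pl y z + pr y z)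
  ax2 : ∀ a b c, ∀ x ∈ 𝒜 a, ∀ y ∈ 𝒜 b, ∀ z ∈ 𝒜 c,
    pl (pr x y) (β z) = pr (α x) (pl y z)
  ax3 : ∀ a b c, ∀ x ∈ 𝒜 a, ∀ y ∈ 𝒜 b, ∀ z ∈ 𝒜 c,
    pr (α x) (pr y z) = pr (pl x y + pr x y) (β z)

/-- A noncommutative 3-BiHom-pre-Poisson color algebra structure. -/
structure IsNC3BiHomPrePoissonColor (𝒜 : Γ → Submodule K g) (χ : Bicharacter K Γ)
    (m : g →ₗ[K] g →ₗ[K] g →ₗ[K] g) (pl pr : g →ₗ[K] g →ₗ[K] g)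
    (α β : g ≃ₗ[K] g) : Prop where
  prelie : Is3BiHomPreLieColor 𝒜 χ m α β
  dend : IsBiHomDendriformColor 𝒜 χ pl pr α.toLinearMap β.toLinearMap
  comp1 : ∀ a b c d, ∀ x ∈ 𝒜 a, ∀ y ∈ 𝒜 b, ∀ z ∈ 𝒜 c, ∀ t ∈ 𝒜 d,
    m (α (β (β x))) (α (β (β y))) (pl z (α t))
        - pl (m (β (β x)) (β (β y)) z) (α (β t))
      = χ.ε c (a + b) •
          pl (β z)
            (m (α (β x)) (α (β y)) (α t) - χ.ε b d • m (α (β x)) (β t) (α (α y))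
              + χ.ε a (b + d) • m (α (β y)) (β t) (α (α x)))
  comp2 : ∀ a b c d, ∀ x ∈ 𝒜 a, ∀ y ∈ 𝒜 b, ∀ z ∈ 𝒜 c, ∀ t ∈ 𝒜 d,
    m (α (β x)) (α (α (β y))) (pr (α z) t)
        - χ.ε (a + b) c • pr (α (β z)) (m (α x) (α (α y)) t)
      = pr (m (β x) (α (β y)) (α z) - χ.ε b c • m (β x) (β z) (α (α y))
            + χ.ε a (b + c) • m (α (β y)) (β z) (α x)) (β t)
  comp3 : ∀ a b c d, ∀ x ∈ 𝒜 a, ∀ y ∈ 𝒜 b, ∀ z ∈ 𝒜 c, ∀ t ∈ 𝒜 d,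
    m (α (β x)) (β (pl y z)) (α (α (β t))) + m (α (β x)) (β (pr y z)) (α (α (β t)))
      = χ.ε a b • pr (α (β y)) (m (α x) (β z) (α (α t)))
        + χ.ε c d • pl (m (β x) (β y) (α (β t))) (α (β z))

/-!
The defining identity of a Kupershmidt operator `T` says precisely that `T` carries the
3-BiHom-ε-commutator of the product `ρ (T u) (T v) w` to the bracket of `g`. Hence the compatibility
conditions (iii) and (iv) of a representation, evaluated at elements `T u`, are the two
five-variable pre-Lie identities; the remaining axioms are the evenness, equivariance and
skew-symmetry of `ρ`, pulled back along `T`.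
-/

section Kupershmidt

/-- A Kupershmidt operator associated with a representation `(V, ρ, αV, βV)`: an even linear map
intertwining the structure maps whose values have bracket given by the action `ρ`. -/
structure IsKupershmidtOperator (𝒜 : Γ → Submodule K g) (𝒱 : Γ → Submodule K V)
    (χ : Bicharacter K Γ) (m : g →ₗ[K] g →ₗ[K] g →ₗ[K] g) (α β : g →ₗ[K] g)
    (ρ : g →ₗ[K] g →ₗ[K] V →ₗ[K] V) (αV βV : V ≃ₗ[K] V) (T : V →ₗ[K] g) : Prop where
  even : ∀ a, ∀ v ∈ 𝒱 a, T v ∈ 𝒜 a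
  comm_alpha : ∀ v, α (T v) = T (αV v)
  comm_beta : ∀ v, β (T v) = T (βV v)
  bracket : ∀ a b c, ∀ u ∈ 𝒱 a, ∀ v ∈ 𝒱 b, ∀ w ∈ 𝒱 c,
    m (T u) (T v) (T w)
      = T (ρ (T u) (T v) w
          - χ.ε b c • ρ (T u) (T (αV.symm (βV w))) (αV (βV.symm v))
          + χ.ε a (b + c) • ρ (T v) (T (αV.symm (βV w))) (αV (βV.symm u)))

/-- The ternary product `{u, v, w} = ρ (T u) (T v) w` induced on the representation space `V` by a
linear map `T : V → g`. -/
def kupershmidtProduct (ρ : g →ₗ[K] g →ₗ[K] V →ₗ[K] V) (T : V →ₗ[K] g) :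
    V →ₗ[K] V →ₗ[K] V →ₗ[K] V :=
  ρ.compl₁₂ T T

@[simp]
lemma kupershmidtProduct_apply (ρ : g →ₗ[K] g →ₗ[K] V →ₗ[K] V) (T : V →ₗ[K] g) (u v w : V) :
    kupershmidtProduct ρ T u v w = ρ (T u) (T v) w :=
  rfl

variable {𝒜 : Γ → Submodule K g} {𝒱 : Γ → Submodule K V} {χ : Bicharacter K Γ}
  {m : g →ₗ[K] g →ₗ[K] g →ₗ[K] g} {α β : g →ₗ[K] g} {ρ : g →ₗ[K] g →ₗ[K] V →ₗ[K] V}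

namespace Is3BiHomLieRep

variable {αV βV : V →ₗ[K] V} {a b c d : Γ} {u v x y : g}

lemma alphaV_rho_apply (hrep : Is3BiHomLieRep 𝒜 𝒱 χ m α β ρ αV βV)
    (hu : u ∈ 𝒜 a) (hv : v ∈ 𝒜 b) (w : V) :
    αV (ρ u v w) = ρ (α u) (α v) (αV w) :=
  (LinearMap.congr_fun (hrep.cond1 a b u hu v hv) w).symm

lemma betaV_rho_apply (hrep : Is3BiHomLieRep 𝒜 𝒱 χ m α β ρ αV βV)
    (hu : u ∈ 𝒜 a) (hv : v ∈ 𝒜 b) (w : V) :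
    βV (ρ u v w) = ρ (β u) (β v) (βV w) :=
  (LinearMap.congr_fun (hrep.cond2 a b u hu v hv) w).symm

lemma rho_rho_apply (hrep : Is3BiHomLieRep 𝒜 𝒱 χ m α β ρ αV βV)
    (hu : u ∈ 𝒜 a) (hv : v ∈ 𝒜 b) (hx : x ∈ 𝒜 c) (hy : y ∈ 𝒜 d) (w : V) :
    ρ (α (β u)) (α (β v)) (ρ x y w)
      = ρ (m (β u) (β v) x) (β y) (βV w)
        + χ.ε c (a + b) • ρ (β x) (m (β u) (β v) y) (βV w)
        + χ.ε (c + d) (a + b) • ρ (β x) (β y) (ρ (α u) (α v) w) :=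
  (LinearMap.congr_fun (hrep.cond3 a b c d u hu v hv x hx y hy) w).trans (add_rotate _ _ _)

lemma rho_bracket_apply (hrep : Is3BiHomLieRep 𝒜 𝒱 χ m α β ρ αV βV)
    (hu : u ∈ 𝒜 a) (hv : v ∈ 𝒜 b) (hx : x ∈ 𝒜 c) (hy : y ∈ 𝒜 d) (w : V) :
    ρ (m (β u) (β v) x) (β y) (βV w)
      = χ.ε a (c + b) • ρ (α (β v)) (β x) (ρ (α u) y w)
        + χ.ε c (a + b) • ρ (β x) (α (β u)) (ρ (α v) y w)
        + ρ (α (β u)) (α (β v)) (ρ x y w) :=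
  LinearMap.congr_fun (hrep.cond4 a b c d u hu v hv x hx y hy) w

variable {T : V →ₗ[K] g} {p q : V}

lemma kupershmidtProduct_mem (hrep : Is3BiHomLieRep 𝒜 𝒱 χ m α β ρ αV βV)
    (hTe : ∀ a, ∀ v ∈ 𝒱 a, T v ∈ 𝒜 a) {w : V} (hp : p ∈ 𝒱 a) (hq : q ∈ 𝒱 b) (hw : w ∈ 𝒱 c) :
    kupershmidtProduct ρ T p q w ∈ 𝒱 (a + b + c) :=
  hrep.rho_even a b c _ (hTe a p hp) _ (hTe b q hq) w hw

lemma alphaV_kupershmidtProduct (hrep : Is3BiHomLieRep 𝒜 𝒱 χ m α β ρ αV βV)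
    (hTe : ∀ a, ∀ v ∈ 𝒱 a, T v ∈ 𝒜 a) (hTα : ∀ v, α (T v) = T (αV v))
    (hp : p ∈ 𝒱 a) (hq : q ∈ 𝒱 b) (w : V) :
    αV (kupershmidtProduct ρ T p q w) = kupershmidtProduct ρ T (αV p) (αV q) (αV w) := by
  simpa only [kupershmidtProduct_apply, hTα] using
    hrep.alphaV_rho_apply (hTe a p hp) (hTe b q hq) w

lemma betaV_kupershmidtProduct (hrep : Is3BiHomLieRep 𝒜 𝒱 χ m α β ρ αV βV)
    (hTe : ∀ a, ∀ v ∈ 𝒱 a, T v ∈ 𝒜 a) (hTβ : ∀ v, β (T v) = T (βV v))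
    (hp : p ∈ 𝒱 a) (hq : q ∈ 𝒱 b) (w : V) :
    βV (kupershmidtProduct ρ T p q w) = kupershmidtProduct ρ T (βV p) (βV q) (βV w) := by
  simpa only [kupershmidtProduct_apply, hTβ] using
    hrep.betaV_rho_apply (hTe a p hp) (hTe b q hq) w

lemma kupershmidtProduct_skew (hrep : Is3BiHomLieRep 𝒜 𝒱 χ m α β ρ αV βV)
    (hTe : ∀ a, ∀ v ∈ 𝒱 a, T v ∈ 𝒜 a) (hp : p ∈ 𝒱 a) (hq : q ∈ 𝒱 b) (w : V) :
    kupershmidtProduct ρ T p q w = -(χ.ε a b • kupershmidtProduct ρ T q p w) :=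
  LinearMap.congr_fun (hrep.rho_skew a b _ (hTe a p hp) _ (hTe b q hq)) w

end Is3BiHomLieRep

namespace IsKupershmidtOperator

variable {αV βV : V ≃ₗ[K] V} {T : V →ₗ[K] g} {a b c : Γ} {u v w : V}

lemma map_preC (hT : IsKupershmidtOperator 𝒜 𝒱 χ m α β ρ αV βV T)
    (hcomm : ∀ v, αV (βV v) = βV (αV v)) (hu : u ∈ 𝒱 a) (hv : v ∈ 𝒱 b) (hw : w ∈ 𝒱 c) :
    T (preC χ (kupershmidtProduct ρ T) αV βV a b c u v w) = m (T u) (T v) (T w) := by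
  have hsymm (v : V) : αV.symm (βV v) = βV (αV.symm v) :=
    Function.Semiconj.inverse_left hcomm αV.left_inv αV.right_inv v
  simp only [hT.bracket a b c u hu v hv w hw, preC, kupershmidtProduct_apply, hsymm]

variable {a₁ a₂ a₄ a₅ : Γ} {x₁ x₂ x₄ x₅ : V}

lemma kupershmidtProduct_kupershmidtProduct
    (hT : IsKupershmidtOperator 𝒜 𝒱 χ m α β ρ αV βV T)
    (hrep : Is3BiHomLieRep 𝒜 𝒱 χ m α β ρ αV.toLinearMap βV.toLinearMap)
    (h₁ : x₁ ∈ 𝒱 a₁) (h₂ : x₂ ∈ 𝒱 a₂) (x₃ : V) (h₄ : x₄ ∈ 𝒱 a₄) (h₅ : x₅ ∈ 𝒱 a₅) :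
    kupershmidtProduct ρ T (αV (βV x₄)) (αV (βV x₅)) (kupershmidtProduct ρ T x₁ x₂ x₃)
      = kupershmidtProduct ρ T
          (preC χ (kupershmidtProduct ρ T) αV βV a₄ a₅ a₁ (βV x₄) (βV x₅) x₁) (βV x₂) (βV x₃)
        + χ.ε a₁ (a₄ + a₅) • kupershmidtProduct ρ T (βV x₁)
          (preC χ (kupershmidtProduct ρ T) αV βV a₄ a₅ a₂ (βV x₄) (βV x₅) x₂) (βV x₃)
        + χ.ε (a₁ + a₂) (a₄ + a₅) • kupershmidtProduct ρ T (βV x₁) (βV x₂)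
          (kupershmidtProduct ρ T (αV x₄) (αV x₅) x₃) := by
  have h₄' : βV x₄ ∈ 𝒱 a₄ := hrep.betaV_even a₄ x₄ h₄
  have h₅' : βV x₅ ∈ 𝒱 a₅ := hrep.betaV_even a₅ x₅ h₅
  simpa only [kupershmidtProduct_apply, hT.map_preC hrep.commV h₄' h₅' h₁,
    hT.map_preC hrep.commV h₄' h₅' h₂, hT.comm_alpha, hT.comm_beta, LinearEquiv.coe_coe] using
    hrep.rho_rho_apply (hT.even _ _ h₄) (hT.even _ _ h₅) (hT.even _ _ h₁)
      (hT.even _ _ h₂) x₃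

lemma kupershmidtProduct_preC (hT : IsKupershmidtOperator 𝒜 𝒱 χ m α β ρ αV βV T)
    (hrep : Is3BiHomLieRep 𝒜 𝒱 χ m α β ρ αV.toLinearMap βV.toLinearMap)
    (h₁ : x₁ ∈ 𝒱 a₁) (h₂ : x₂ ∈ 𝒱 a₂) (x₃ : V) (h₄ : x₄ ∈ 𝒱 a₄) (h₅ : x₅ ∈ 𝒱 a₅) :
    kupershmidtProduct ρ T
        (preC χ (kupershmidtProduct ρ T) αV βV a₄ a₅ a₁ (βV x₄) (βV x₅) x₁) (βV x₂) (βV x₃)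
      = χ.ε a₄ (a₁ + a₅) • kupershmidtProduct ρ T (αV (βV x₅)) (βV x₁)
          (kupershmidtProduct ρ T (αV x₄) x₂ x₃)
        + χ.ε a₁ (a₄ + a₅) • kupershmidtProduct ρ T (βV x₁) (αV (βV x₄))
          (kupershmidtProduct ρ T (αV x₅) x₂ x₃)
        + kupershmidtProduct ρ T (αV (βV x₄)) (αV (βV x₅))
          (kupershmidtProduct ρ T x₁ x₂ x₃) := by
  have h₄' : βV x₄ ∈ 𝒱 a₄ := hrep.betaV_even a₄ x₄ h₄
  have h₅' : βV x₅ ∈ 𝒱 a₅ := hrep.betaV_even a₅ x₅ h₅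
  simpa only [kupershmidtProduct_apply, hT.map_preC hrep.commV h₄' h₅' h₁,
    hT.comm_alpha, hT.comm_beta, LinearEquiv.coe_coe] using
    hrep.rho_bracket_apply (hT.even _ _ h₄) (hT.even _ _ h₅) (hT.even _ _ h₁)
      (hT.even _ _ h₂) x₃

end IsKupershmidtOperator

theorem kupershmidt_induced_3BiHomPreLie_general {αV βV : V ≃ₗ[K] V} {T : V →ₗ[K] g}
    (hrep : Is3BiHomLieRep 𝒜 𝒱 χ m α β ρ αV.toLinearMap βV.toLinearMap)
    (hT : IsKupershmidtOperator 𝒜 𝒱 χ m α β ρ αV βV T) :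
    Is3BiHomPreLieColor 𝒱 χ (kupershmidtProduct ρ T) αV βV where
  bracket_even _ _ _ _ hx _ hy _ hz := hrep.kupershmidtProduct_mem hT.even hx hy hz
  alpha_even := hrep.alphaV_even
  beta_even := hrep.betaV_even
  comm := hrep.commV
  mult_alpha _ _ _ _ hx _ hy z _ :=
    hrep.alphaV_kupershmidtProduct hT.even hT.comm_alpha hx hy z
  mult_beta _ _ _ _ hx _ hy z _ :=
    hrep.betaV_kupershmidtProduct hT.even hT.comm_beta hx hy z
  skew a b _ x hx y hy z _ :=
    hrep.kupershmidtProduct_skew hT.even (hrep.betaV_even a x hx) (hrep.betaV_even b y hy) (αV z)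
  identity3 _ _ _ _ _ _ h₁ _ h₂ x₃ _ _ h₄ _ h₅ :=
    hT.kupershmidtProduct_kupershmidtProduct hrep h₁ h₂ x₃ h₄ h₅
  identity4 _ _ _ _ _ _ h₁ _ h₂ x₃ _ _ h₄ _ h₅ :=
    hT.kupershmidtProduct_preC hrep h₁ h₂ x₃ h₄ h₅

end Kupershmidt

/-- a Kupershmidt operator on a multiplicative 3-BiHom-Lie color
algebra induces a 3-BiHom-pre-Lie color algebra structure on the
representation space. -/
theorem kupershmidt_induced_3BiHomPreLie
    (𝒜 : Γ → Submodule K g) (𝒱 : Γ → Submodule K V) (χ : Bicharacter K Γ)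
    (m : g →ₗ[K] g →ₗ[K] g →ₗ[K] g) (α β : g ≃ₗ[K] g)
    (ρ : g →ₗ[K] g →ₗ[K] V →ₗ[K] V) (αV βV : V ≃ₗ[K] V)
    (hLie : IsMult3BiHomLieColor 𝒜 χ m α.toLinearMap β.toLinearMap)
    (hrep : Is3BiHomLieRep 𝒜 𝒱 χ m α.toLinearMap β.toLinearMap ρ
      αV.toLinearMap βV.toLinearMap)
    (T : V →ₗ[K] g)
    (hTe : ∀ a, ∀ v ∈ 𝒱 a, T v ∈ 𝒜 a)
    (hTα : ∀ v, α (T v) = T (αV v)) (hTβ : ∀ v, β (T v) = T (βV v))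
    (hT : ∀ a b c : Γ, ∀ u ∈ 𝒱 a, ∀ v ∈ 𝒱 b, ∀ w ∈ 𝒱 c,
      m (T u) (T v) (T w)
        = T (ρ (T u) (T v) w
            - χ.ε b c • ρ (T u) (T (αV.symm (βV w))) (αV (βV.symm v))
            + χ.ε a (b + c) • ρ (T v) (T (αV.symm (βV w))) (αV (βV.symm u))))
    (mV : V →ₗ[K] V →ₗ[K] V →ₗ[K] V)
    (hmV : ∀ u v w, mV u v w = ρ (T u) (T v) w) :
    Is3BiHomPreLieColor 𝒱 χ mV αV βV := by
  obtain rfl : mV = kupershmidtProduct ρ T := by ext u v w; exact hmV u v w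
  exact kupershmidt_induced_3BiHomPreLie_general hrep ⟨hTe, hTα, hTβ, hT⟩
end

section
/- Let (g, ≺, ≻, ε) be a dendriform color algebra and let α, β : g → g be two even commuting algebra homomorphisms (α(x≺y)=α(x)≺α(y), β(x≺y)=β(x)≺β(y), α(x≻y)=α(x)≻α(y), β(x≻y)=β(x)≻β(y), α∘β = β∘α). Then (g, ≺_{α,β}, ≻_{α,β}, ε, α, β) is a BiHom-dendriform color algebra, where x ≺_{α,β} y = α(x) ≺ β(y) and x ≻_{α,β} y = α(x) ≻ β(y) for all homogeneous x,y ∈ g. -/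
variable {K : Type*} [Field K] {Γ : Type*} [AddCommGroup Γ]
variable {g : Type*} [AddCommGroup g] [Module K g]
variable {V : Type*} [AddCommGroup V] [Module K V]

/-!
All three dendriform axioms have the BiHom-associative shape `(x ∗ y) ∗ β z = α x ∗ (y ∗ z)`, with a
possibly different product at each place. Twisting by commuting endomorphisms `φ` and `ψ` turns
either side of such an identity at `(x, y, z)` into the same side of the untwisted identity at
`(φ² x, φ ψ y, ψ² z)`. Since `φ` and `ψ` also respect `≺ + ≻`, one computation serves all three
axioms. It applies to any BiHom-dendriform color algebra, whose structure maps `α`, `β` become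
`α φ`, `β ψ`; a dendriform color algebra is the case `α = β = id`.
-/

/-- Even linear maps: those preserving the degree of homogeneous elements. -/
def IsEvenMap {ι : Type*} (𝒜 : ι → Submodule K g) (φ : g →ₗ[K] g) : Prop :=
  ∀ ⦃a⦄ ⦃x⦄, x ∈ 𝒜 a → φ x ∈ 𝒜 a

/-- Even bilinear products: those adding the degrees of homogeneous elements. -/
def IsEvenProduct (𝒜 : Γ → Submodule K g) (μ : g →ₗ[K] g →ₗ[K] g) : Prop :=
  ∀ ⦃a b⦄ ⦃x⦄, x ∈ 𝒜 a → ∀ ⦃y⦄, y ∈ 𝒜 b → μ x y ∈ 𝒜 (a + b)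

/-- Even endomorphisms of the graded algebra `(g, μ)`; multiplicativity is only required on
homogeneous elements. -/
structure IsEvenEnd {ι : Type*} (𝒜 : ι → Submodule K g) (μ : g →ₗ[K] g →ₗ[K] g)
    (φ : g →ₗ[K] g) : Prop where
  even : IsEvenMap 𝒜 φ
  map_mul : ∀ ⦃a b⦄ ⦃x⦄, x ∈ 𝒜 a → ∀ ⦃y⦄, y ∈ 𝒜 b → φ (μ x y) = μ (φ x) (φ y)

/-- BiHom-associativity with a possibly different product at each of its four places, the outer one
preceding the inner one on either side. The three dendriform axioms are the quadruples
`(≺, ≺, ≺, ·)`, `(≺, ≻, ≻, ≺)` and `(≻, ·, ≻, ≻)`, where `· = ≺ + ≻`. -/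
def IsBiHomAssoc {ι : Type*} (𝒜 : ι → Submodule K g)
    (μ₁ μ₂ μ₃ μ₄ : g →ₗ[K] g →ₗ[K] g) (α β : g →ₗ[K] g) : Prop :=
  ∀ ⦃a b c⦄ ⦃x⦄, x ∈ 𝒜 a → ∀ ⦃y⦄, y ∈ 𝒜 b → ∀ ⦃z⦄, z ∈ 𝒜 c →
    μ₁ (μ₂ x y) (β z) = μ₃ (α x) (μ₄ y z)

theorem IsEvenProduct.compl₁₂ {𝒜 : Γ → Submodule K g} {μ : g →ₗ[K] g →ₗ[K] g}
    {φ ψ : g →ₗ[K] g} (hμ : IsEvenProduct 𝒜 μ) (hφ : IsEvenMap 𝒜 φ) (hψ : IsEvenMap 𝒜 ψ) :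
    IsEvenProduct 𝒜 (μ.compl₁₂ φ ψ) :=
  fun _ _ _ hx _ hy => hμ (hφ hx) (hψ hy)

section Twist

variable {ι : Type*} {𝒜 : ι → Submodule K g} {μ ν μ₁ μ₂ μ₃ μ₄ : g →ₗ[K] g →ₗ[K] g}
  {α β θ φ ψ : g →ₗ[K] g}

theorem IsEvenMap.comp (hθ : IsEvenMap 𝒜 θ) (hφ : IsEvenMap 𝒜 φ) : IsEvenMap 𝒜 (θ ∘ₗ φ) :=
  fun _ _ hx => hθ (hφ hx)

namespace IsEvenEnd

theorem add (hμ : IsEvenEnd 𝒜 μ φ) (hν : IsEvenEnd 𝒜 ν φ) : IsEvenEnd 𝒜 (μ + ν) φ where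
  even := hμ.even
  map_mul _ _ x hx y hy := by
    simp only [LinearMap.add_apply, map_add, hμ.map_mul hx hy, hν.map_mul hx hy]

theorem comp (hθ : IsEvenEnd 𝒜 μ θ) (hφ : IsEvenEnd 𝒜 μ φ) : IsEvenEnd 𝒜 μ (θ ∘ₗ φ) where
  even := hθ.even.comp hφ.even
  map_mul _ _ x hx y hy := by
    simp only [LinearMap.comp_apply, hφ.map_mul hx hy, hθ.map_mul (hφ.even hx) (hφ.even hy)]

theorem compl₁₂ (hθ : IsEvenEnd 𝒜 μ θ) (hφ : IsEvenMap 𝒜 φ) (hψ : IsEvenMap 𝒜 ψ)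
    (hθφ : Function.Commute θ φ) (hθψ : Function.Commute θ ψ) :
    IsEvenEnd 𝒜 (μ.compl₁₂ φ ψ) θ where
  even := hθ.even
  map_mul _ _ x hx y hy := by
    simp only [LinearMap.compl₁₂_apply, hθ.map_mul (hφ hx) (hψ hy), hθφ.eq x, hθψ.eq y]

end IsEvenEnd

theorem IsBiHomAssoc.compl₁₂ (h : IsBiHomAssoc 𝒜 μ₁ μ₂ μ₃ μ₄ α β)
    (hφ : IsEvenEnd 𝒜 μ₂ φ) (hψ : IsEvenEnd 𝒜 μ₄ ψ) (hφψ : Function.Commute φ ψ)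
    (hαφ : Function.Commute α φ) (hβψ : Function.Commute β ψ) :
    IsBiHomAssoc 𝒜 (μ₁.compl₁₂ φ ψ) (μ₂.compl₁₂ φ ψ) (μ₃.compl₁₂ φ ψ) (μ₄.compl₁₂ φ ψ)
      (α ∘ₗ φ) (β ∘ₗ ψ) := by
  intro a b c x hx y hy z hz
  calc μ₁ (φ (μ₂ (φ x) (ψ y))) (ψ (β (ψ z)))
      = μ₁ (μ₂ (φ (φ x)) (φ (ψ y))) (β (ψ (ψ z))) := by
        rw [hφ.map_mul (hφ.even hx) (hψ.even hy), ← hβψ.eq (ψ z)]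
    _ = μ₃ (α (φ (φ x))) (μ₄ (φ (ψ y)) (ψ (ψ z))) :=
        h (hφ.even (hφ.even hx)) (hφ.even (hψ.even hy)) (hψ.even (hψ.even hz))
    _ = μ₃ (φ (α (φ x))) (ψ (μ₄ (φ y) (ψ z))) := by
        rw [hψ.map_mul (hφ.even hy) (hψ.even hz), hαφ.eq, hφψ.eq]

end Twist

namespace IsBiHomDendriformColor

variable {𝒜 : Γ → Submodule K g} {χ : Bicharacter K Γ} {pl pr : g →ₗ[K] g →ₗ[K] g}
  {α β : g →ₗ[K] g}

theorem isEvenEnd_alpha_pl (h : IsBiHomDendriformColor 𝒜 χ pl pr α β) : IsEvenEnd 𝒜 pl α :=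
  ⟨h.alpha_even, h.alpha_pl⟩

theorem isEvenEnd_alpha_pr (h : IsBiHomDendriformColor 𝒜 χ pl pr α β) : IsEvenEnd 𝒜 pr α :=
  ⟨h.alpha_even, h.alpha_pr⟩

theorem isEvenEnd_beta_pl (h : IsBiHomDendriformColor 𝒜 χ pl pr α β) : IsEvenEnd 𝒜 pl β :=
  ⟨h.beta_even, h.beta_pl⟩

theorem isEvenEnd_beta_pr (h : IsBiHomDendriformColor 𝒜 χ pl pr α β) : IsEvenEnd 𝒜 pr β :=
  ⟨h.beta_even, h.beta_pr⟩

theorem isBiHomAssoc_left (h : IsBiHomDendriformColor 𝒜 χ pl pr α β) :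
    IsBiHomAssoc 𝒜 pl pl pl (pl + pr) α β :=
  h.ax1

theorem isBiHomAssoc_middle (h : IsBiHomDendriformColor 𝒜 χ pl pr α β) :
    IsBiHomAssoc 𝒜 pl pr pr pl α β :=
  h.ax2

theorem isBiHomAssoc_right (h : IsBiHomDendriformColor 𝒜 χ pl pr α β) :
    IsBiHomAssoc 𝒜 pr (pl + pr) pr pr α β :=
  fun _ _ _ _ hx _ hy _ hz => (h.ax3 _ _ _ _ hx _ hy _ hz).symm

end IsBiHomDendriformColor

theorem twist_dendriform_color_general {𝒜 : Γ → Submodule K g} {χ : Bicharacter K Γ}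
    {pl pr : g →ₗ[K] g →ₗ[K] g} {α β φ ψ : g →ₗ[K] g}
    (h : IsBiHomDendriformColor 𝒜 χ pl pr α β)
    (hφl : IsEvenEnd 𝒜 pl φ) (hφr : IsEvenEnd 𝒜 pr φ)
    (hψl : IsEvenEnd 𝒜 pl ψ) (hψr : IsEvenEnd 𝒜 pr ψ)
    (hφψ : Function.Commute φ ψ)
    (hαφ : Function.Commute α φ) (hαψ : Function.Commute α ψ)
    (hβφ : Function.Commute β φ) (hβψ : Function.Commute β ψ) :
    IsBiHomDendriformColor 𝒜 χ (pl.compl₁₂ φ ψ) (pr.compl₁₂ φ ψ) (α ∘ₗ φ) (β ∘ₗ ψ) := by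
  have hφ : IsEvenMap 𝒜 φ := hφl.even
  have hψ : IsEvenMap 𝒜 ψ := hψl.even
  have hαφ_φ : Function.Commute (α ∘ₗ φ) φ := hαφ.comp_left (.refl φ)
  have hαφ_ψ : Function.Commute (α ∘ₗ φ) ψ := hαψ.comp_left hφψ
  have hβψ_φ : Function.Commute (β ∘ₗ ψ) φ := hβφ.comp_left hφψ.symm
  have hβψ_ψ : Function.Commute (β ∘ₗ ψ) ψ := hβψ.comp_left (.refl ψ)
  have hαβ : Function.Commute α β := h.comm
  have hαφ_β : Function.Commute (α ∘ₗ φ) β := hαβ.comp_left hβφ.symm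
  exact {
    pl_even := IsEvenProduct.compl₁₂ h.pl_even hφ hψ
    pr_even := IsEvenProduct.compl₁₂ h.pr_even hφ hψ
    alpha_even := IsEvenMap.comp h.alpha_even hφ
    beta_even := IsEvenMap.comp h.beta_even hψ
    comm := hαφ_β.comp_right hαφ_ψ
    alpha_pl := ((h.isEvenEnd_alpha_pl.comp hφl).compl₁₂ hφ hψ hαφ_φ hαφ_ψ).map_mul
    beta_pl := ((h.isEvenEnd_beta_pl.comp hψl).compl₁₂ hφ hψ hβψ_φ hβψ_ψ).map_mul
    alpha_pr := ((h.isEvenEnd_alpha_pr.comp hφr).compl₁₂ hφ hψ hαφ_φ hαφ_ψ).map_mul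
    beta_pr := ((h.isEvenEnd_beta_pr.comp hψr).compl₁₂ hφ hψ hβψ_φ hβψ_ψ).map_mul
    ax1 := h.isBiHomAssoc_left.compl₁₂ hφl (hψl.add hψr) hφψ hαφ hβψ
    ax2 := h.isBiHomAssoc_middle.compl₁₂ hφr hψl hφψ hαφ hβψ
    ax3 _ _ _ _ hx _ hy _ hz :=
      (h.isBiHomAssoc_right.compl₁₂ (hφl.add hφr) hψr hφψ hαφ hβψ hx hy hz).symm }

/-- twisting a dendriform color algebra by two even commuting
algebra homomorphisms yields a BiHom-dendriform color algebra. -/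
theorem twist_dendriform_color
    (𝒜 : Γ → Submodule K g) (χ : Bicharacter K Γ)
    (pl pr : g →ₗ[K] g →ₗ[K] g)
    (h : IsBiHomDendriformColor 𝒜 χ pl pr LinearMap.id LinearMap.id)
    (α β : g →ₗ[K] g)
    (hαe : ∀ a, ∀ x ∈ 𝒜 a, α x ∈ 𝒜 a) (hβe : ∀ a, ∀ x ∈ 𝒜 a, β x ∈ 𝒜 a)
    (hcomm : ∀ x, α (β x) = β (α x))
    (hαl : ∀ x y, α (pl x y) = pl (α x) (α y))
    (hβl : ∀ x y, β (pl x y) = pl (β x) (β y))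
    (hαr : ∀ x y, α (pr x y) = pr (α x) (α y))
    (hβr : ∀ x y, β (pr x y) = pr (β x) (β y))
    (pl' pr' : g →ₗ[K] g →ₗ[K] g)
    (hpl' : ∀ x y, pl' x y = pl (α x) (β y))
    (hpr' : ∀ x y, pr' x y = pr (α x) (β y)) :
    IsBiHomDendriformColor 𝒜 χ pl' pr' α β := by
  obtain rfl : pl' = pl.compl₁₂ α β := LinearMap.ext₂ hpl'
  obtain rfl : pr' = pr.compl₁₂ α β := LinearMap.ext₂ hpr'
  exact twist_dendriform_color_general h
    ⟨hαe, fun _ _ x _ y _ => hαl x y⟩ ⟨hαe, fun _ _ x _ y _ => hαr x y⟩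
    ⟨hβe, fun _ _ x _ y _ => hβl x y⟩ ⟨hβe, fun _ _ x _ y _ => hβr x y⟩
    hcomm .id_left .id_left .id_left .id_left
end

section
/- Let (g, ≺, ≻, ε, α, β) be a BiHom-dendriform color algebra. Then (g, μ, ε, α, β) with μ(x,y) = x≺y + x≻y is a BiHom-associative color algebra. -/
variable {K : Type*} [Field K] {Γ : Type*} [AddCommGroup Γ]
variable {g : Type*} [AddCommGroup g] [Module K g]
variable {V : Type*} [AddCommGroup V] [Module K V]

section BilinearSum

variable {R M N : Type*} [CommSemiring R] [AddCommMonoid M] [Module R M]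
  [AddCommMonoid N] [Module R N]

theorem map_add_apply_apply {f₁ f₂ : M →ₗ[R] M →ₗ[R] M} {g₁ g₂ : N →ₗ[R] N →ₗ[R] N}
    {φ : M →ₗ[R] N} {x y : M}
    (h₁ : φ (f₁ x y) = g₁ (φ x) (φ y)) (h₂ : φ (f₂ x y) = g₂ (φ x) (φ y)) :
    φ ((f₁ + f₂) x y) = (g₁ + g₂) (φ x) (φ y) := by
  simp only [LinearMap.add_apply, map_add, h₁, h₂]

theorem add_bihom_assoc_of_dendriform {pl pr : M →ₗ[R] M →ₗ[R] M} {α β : M → M} {x y z : M}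
    (hleft : pl (pl x y) (β z) = pl (α x) (pl y z + pr y z))
    (hmiddle : pl (pr x y) (β z) = pr (α x) (pl y z))
    (hright : pr (α x) (pr y z) = pr (pl x y + pr x y) (β z)) :
    (pl + pr) (α x) ((pl + pr) y z) = (pl + pr) ((pl + pr) x y) (β z) :=
  calc
    (pl + pr) (α x) ((pl + pr) y z)
      = pl (α x) (pl y z + pr y z) + pr (α x) (pl y z) + pr (α x) (pr y z) := by
        simp only [LinearMap.add_apply, map_add]
        abel
    _ = pl (pl x y) (β z) + pl (pr x y) (β z) + pr (pl x y + pr x y) (β z) := by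
        rw [hleft, hmiddle, hright]
    _ = (pl + pr) ((pl + pr) x y) (β z) := by
        simp only [LinearMap.add_apply, map_add]
        abel

end BilinearSum

/-- the sum of the two operations of a BiHom-dendriform color
algebra is a BiHom-associative color algebra multiplication. -/
theorem dendriform_to_assoc
    (𝒜 : Γ → Submodule K g) (χ : Bicharacter K Γ)
    (pl pr : g →ₗ[K] g →ₗ[K] g) (α β : g →ₗ[K] g)
    (h : IsBiHomDendriformColor 𝒜 χ pl pr α β) :
    IsBiHomAssocColor 𝒜 χ (pl + pr) α β :=
  { mu_even := fun a b x hx y hy =>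
      add_mem (h.pl_even a b x hx y hy) (h.pr_even a b x hx y hy)
    alpha_even := h.alpha_even
    beta_even := h.beta_even
    comm := h.comm
    mult_alpha := fun a b x hx y hy =>
      (map_add_apply_apply (h.alpha_pl a b x hx y hy) (h.alpha_pr a b x hx y hy)).symm
    mult_beta := fun a b x hx y hy =>
      (map_add_apply_apply (h.beta_pl a b x hx y hy) (h.beta_pr a b x hx y hy)).symm
    assoc := fun a b c x hx y hy z hz =>
      add_bihom_assoc_of_dendriform (h.ax1 a b c x hx y hy z hz)
        (h.ax2 a b c x hx y hy z hz) (h.ax3 a b c x hx y hy z hz) }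
end

section
/- Let T : V → g be a Kupershmidt operator on a BiHom-associative color algebra (g, μ, ε, α, β) with respect to a bimodule (V, 𝔩, 𝔯, α_V, β_V). Then V carries a BiHom-dendriform color algebra structure (V, ≺_V, ≻_V, ε, α_V, β_V) with the even bilinear operations u ≺_V v = ε(u,v) 𝔯(T(v))u and u ≻_V v = 𝔩(T(u))v for all homogeneous u,v ∈ V. -/
variable {K : Type*} [Field K] {Γ : Type*} [AddCommGroup Γ]
variable {g : Type*} [AddCommGroup g] [Module K g]
variable {V : Type*} [AddCommGroup V] [Module K V]

/-- The sign-twisted right action `v ◁ x = ε(v, x) 𝔯(x) v`, for `v` of degree `c` and `x` of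
degree `a`. The twist absorbs every sign of the color bimodule axioms; as `ε` is only defined on
degrees, the degrees `c` and `a` are arguments. -/
def Bicharacter.rightAction (χ : Bicharacter K Γ) (r : g →ₗ[K] V →ₗ[K] V) (c a : Γ) :
    V →ₗ[K] g →ₗ[K] V :=
  χ.ε c a • r.flip

theorem Bicharacter.rightAction_apply (χ : Bicharacter K Γ) (r : g →ₗ[K] V →ₗ[K] V)
    (c a : Γ) (v : V) (x : g) : χ.rightAction r c a v x = χ.ε c a • r x v :=
  rfl

/-- A Kupershmidt operator (relative Rota–Baxter operator of weight zero) `T : V → g` on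
`(g, μ, ε, α, β)` with respect to `(V, 𝔩, 𝔯, α_V, β_V)`. The axioms of the algebra and of the
bimodule are not part of the notion. -/
structure IsKupershmidtOperator_s17 (𝒜 : Γ → Submodule K g) (𝒱 : Γ → Submodule K V)
    (χ : Bicharacter K Γ) (μ : g →ₗ[K] g →ₗ[K] g) (α β : g →ₗ[K] g)
    (l r : g →ₗ[K] V →ₗ[K] V) (αV βV : V →ₗ[K] V) (T : V →ₗ[K] g) : Prop where
  map_mem : ∀ ⦃a v⦄, v ∈ 𝒱 a → T v ∈ 𝒜 a
  map_alphaV : ∀ v, T (αV v) = α (T v)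
  map_betaV : ∀ v, T (βV v) = β (T v)
  mu_map_map : ∀ ⦃a b u v⦄, u ∈ 𝒱 a → v ∈ 𝒱 b →
    μ (T u) (T v) = T (l (T u) v + χ.ε a b • r (T v) u)

/-- The operations `≺` and `≻` on `V` are those induced by `T`, namely `u ≺ v = ε(u, v) 𝔯(T v) u`
and `u ≻ v = 𝔩(T u) v` for homogeneous `u` and `v`. This is a predicate rather than a construction
of `≺`: the sign is only available on homogeneous elements, and `𝒱` need not be a direct sum
decomposition of `V`. -/
structure IsInducedPair (𝒱 : Γ → Submodule K V) (χ : Bicharacter K Γ)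
    (l r : g →ₗ[K] V →ₗ[K] V) (T : V →ₗ[K] g) (prec succ : V →ₗ[K] V →ₗ[K] V) : Prop where
  prec_eq : ∀ ⦃a b u v⦄, u ∈ 𝒱 a → v ∈ 𝒱 b → prec u v = χ.rightAction r a b u (T v)
  succ_eq : ∀ ⦃a b u v⦄, u ∈ 𝒱 a → v ∈ 𝒱 b → succ u v = l (T u) v

section

variable {𝒜 : Γ → Submodule K g} {𝒱 : Γ → Submodule K V} {χ : Bicharacter K Γ}
  {μ : g →ₗ[K] g →ₗ[K] g} {α β : g →ₗ[K] g} {l r : g →ₗ[K] V →ₗ[K] V} {αV βV : V →ₗ[K] V}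
  {a b c : Γ}

namespace IsAssocColorBimodule

variable {x y : g} {v : V}

theorem rightAction_mem (hmod : IsAssocColorBimodule 𝒜 𝒱 χ μ α β l r αV βV)
    (hv : v ∈ 𝒱 c) (hx : x ∈ 𝒜 a) : χ.rightAction r c a v x ∈ 𝒱 (c + a) :=
  add_comm a c ▸ Submodule.smul_mem _ _ (hmod.r_even a c x hx v hv)

theorem rightAction_rightAction (hmod : IsAssocColorBimodule 𝒜 𝒱 χ μ α β l r αV βV)
    (hv : v ∈ 𝒱 c) (hx : x ∈ 𝒜 a) (hy : y ∈ 𝒜 b) :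
    χ.rightAction r (c + a) b (χ.rightAction r c a v x) (β y) =
      χ.rightAction r c (a + b) (αV v) (μ x y) := by
  have sign_eq : χ.ε c a * χ.ε (c + a) b = χ.ε c (a + b) * χ.ε a b := by
    rw [χ.add_left, χ.add_right]
    ring
  simp only [χ.rightAction_apply, hmod.r_mu a b c x hx y hy v hv, map_smul,
    LinearMap.smul_apply, smul_smul, sign_eq]

theorem rightAction_left (hmod : IsAssocColorBimodule 𝒜 𝒱 χ μ α β l r αV βV)
    (hx : x ∈ 𝒜 a) (hv : v ∈ 𝒱 c) (hy : y ∈ 𝒜 b) :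
    χ.rightAction r (a + c) b (l x v) (β y) = l (α x) (χ.rightAction r c b v y) := by
  simp only [χ.rightAction_apply, map_smul, smul_smul, hmod.l_r a b c x hx y hy v hv,
    χ.add_left, mul_comm]

end IsAssocColorBimodule

namespace IsInducedPair

variable {T : V →ₗ[K] g} {prec succ : V →ₗ[K] V →ₗ[K] V} {u v w : V}

theorem prec_mem (h : IsInducedPair 𝒱 χ l r T prec succ)
    (hmod : IsAssocColorBimodule 𝒜 𝒱 χ μ α β l r αV βV)
    (hT : IsKupershmidtOperator_s17 𝒜 𝒱 χ μ α β l r αV βV T) (hu : u ∈ 𝒱 a) (hv : v ∈ 𝒱 b) :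
    prec u v ∈ 𝒱 (a + b) :=
  h.prec_eq hu hv ▸ hmod.rightAction_mem hu (hT.map_mem hv)

theorem succ_mem (h : IsInducedPair 𝒱 χ l r T prec succ)
    (hmod : IsAssocColorBimodule 𝒜 𝒱 χ μ α β l r αV βV)
    (hT : IsKupershmidtOperator_s17 𝒜 𝒱 χ μ α β l r αV βV T) (hu : u ∈ 𝒱 a) (hv : v ∈ 𝒱 b) :
    succ u v ∈ 𝒱 (a + b) :=
  h.succ_eq hu hv ▸ hmod.l_even a b _ (hT.map_mem hu) v hv

theorem map_prec (h : IsInducedPair 𝒱 χ l r T prec succ) {φ : V →ₗ[K] V} {ψ : g →ₗ[K] g}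
    (hφ : ∀ a, ∀ v ∈ 𝒱 a, φ v ∈ 𝒱 a) (hTmem : ∀ ⦃a v⦄, v ∈ 𝒱 a → T v ∈ 𝒜 a)
    (hTφ : ∀ v, T (φ v) = ψ (T v))
    (hr : ∀ a b, ∀ x ∈ 𝒜 a, ∀ v ∈ 𝒱 b, φ (r x v) = r (ψ x) (φ v))
    (hu : u ∈ 𝒱 a) (hv : v ∈ 𝒱 b) : φ (prec u v) = prec (φ u) (φ v) := by
  rw [h.prec_eq hu hv, h.prec_eq (hφ a u hu) (hφ b v hv), χ.rightAction_apply,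
    χ.rightAction_apply, map_smul, hr b a _ (hTmem hv) u hu, hTφ]

theorem map_succ (h : IsInducedPair 𝒱 χ l r T prec succ) {φ : V →ₗ[K] V} {ψ : g →ₗ[K] g}
    (hφ : ∀ a, ∀ v ∈ 𝒱 a, φ v ∈ 𝒱 a) (hTmem : ∀ ⦃a v⦄, v ∈ 𝒱 a → T v ∈ 𝒜 a)
    (hTφ : ∀ v, T (φ v) = ψ (T v))
    (hl : ∀ a b, ∀ x ∈ 𝒜 a, ∀ v ∈ 𝒱 b, φ (l x v) = l (ψ x) (φ v))
    (hu : u ∈ 𝒱 a) (hv : v ∈ 𝒱 b) : φ (succ u v) = succ (φ u) (φ v) := by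
  rw [h.succ_eq hu hv, h.succ_eq (hφ a u hu) (hφ b v hv), hl a b _ (hTmem hu) v hv, hTφ]

theorem map_prec_add_succ (h : IsInducedPair 𝒱 χ l r T prec succ)
    (hT : IsKupershmidtOperator_s17 𝒜 𝒱 χ μ α β l r αV βV T) (hu : u ∈ 𝒱 a) (hv : v ∈ 𝒱 b) :
    T (prec u v + succ u v) = μ (T u) (T v) := by
  rw [h.prec_eq hu hv, h.succ_eq hu hv, χ.rightAction_apply, add_comm, hT.mu_map_map hu hv]

theorem prec_prec (h : IsInducedPair 𝒱 χ l r T prec succ)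
    (hmod : IsAssocColorBimodule 𝒜 𝒱 χ μ α β l r αV βV)
    (hT : IsKupershmidtOperator_s17 𝒜 𝒱 χ μ α β l r αV βV T)
    (hu : u ∈ 𝒱 a) (hv : v ∈ 𝒱 b) (hw : w ∈ 𝒱 c) :
    prec (prec u v) (βV w) = prec (αV u) (prec v w + succ v w) :=
  have hvw : prec v w + succ v w ∈ 𝒱 (b + c) :=
    add_mem (h.prec_mem hmod hT hv hw) (h.succ_mem hmod hT hv hw)
  calc
    prec (prec u v) (βV w)
      = χ.rightAction r (a + b) c (χ.rightAction r a b u (T v)) (β (T w)) := by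
        rw [h.prec_eq (h.prec_mem hmod hT hu hv) (hmod.betaV_even c w hw), h.prec_eq hu hv,
          hT.map_betaV]
    _ = χ.rightAction r a (b + c) (αV u) (μ (T v) (T w)) :=
        hmod.rightAction_rightAction hu (hT.map_mem hv) (hT.map_mem hw)
    _ = prec (αV u) (prec v w + succ v w) := by
        rw [h.prec_eq (hmod.alphaV_even a u hu) hvw, h.map_prec_add_succ hT hv hw]

theorem succ_prec (h : IsInducedPair 𝒱 χ l r T prec succ)
    (hmod : IsAssocColorBimodule 𝒜 𝒱 χ μ α β l r αV βV)
    (hT : IsKupershmidtOperator_s17 𝒜 𝒱 χ μ α β l r αV βV T)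
    (hu : u ∈ 𝒱 a) (hv : v ∈ 𝒱 b) (hw : w ∈ 𝒱 c) :
    prec (succ u v) (βV w) = succ (αV u) (prec v w) :=
  calc
    prec (succ u v) (βV w)
      = χ.rightAction r (a + b) c (l (T u) v) (β (T w)) := by
        rw [h.prec_eq (h.succ_mem hmod hT hu hv) (hmod.betaV_even c w hw), h.succ_eq hu hv,
          hT.map_betaV]
    _ = l (α (T u)) (χ.rightAction r b c v (T w)) :=
        hmod.rightAction_left (hT.map_mem hu) hv (hT.map_mem hw)
    _ = succ (αV u) (prec v w) := by
        rw [h.succ_eq (hmod.alphaV_even a u hu) (h.prec_mem hmod hT hv hw), h.prec_eq hv hw,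
          hT.map_alphaV]

theorem succ_succ (h : IsInducedPair 𝒱 χ l r T prec succ)
    (hmod : IsAssocColorBimodule 𝒜 𝒱 χ μ α β l r αV βV)
    (hT : IsKupershmidtOperator_s17 𝒜 𝒱 χ μ α β l r αV βV T)
    (hu : u ∈ 𝒱 a) (hv : v ∈ 𝒱 b) (hw : w ∈ 𝒱 c) :
    succ (αV u) (succ v w) = succ (prec u v + succ u v) (βV w) :=
  have huv : prec u v + succ u v ∈ 𝒱 (a + b) :=
    add_mem (h.prec_mem hmod hT hu hv) (h.succ_mem hmod hT hu hv)
  calc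
    succ (αV u) (succ v w)
      = l (α (T u)) (l (T v) w) := by
        rw [h.succ_eq (hmod.alphaV_even a u hu) (h.succ_mem hmod hT hv hw), h.succ_eq hv hw,
          hT.map_alphaV]
    _ = l (μ (T u) (T v)) (βV w) :=
        hmod.l_mu a b c _ (hT.map_mem hu) _ (hT.map_mem hv) w hw
    _ = succ (prec u v + succ u v) (βV w) := by
        rw [h.succ_eq huv (hmod.betaV_even c w hw), h.map_prec_add_succ hT hu hv]

end IsInducedPair

/-- Each dendriform axiom is one sign-free compatibility between the actions of `g`, evaluated at
`T u`, `T v`, `T w`: the Kupershmidt identity reads `T (u ≺ v + u ≻ v) = μ (T u) (T v)`, so acting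
by a product in `g` is acting by the sum of the two operations. -/
theorem kupershmidt_induced_dendriform_general {T : V →ₗ[K] g} {prec succ : V →ₗ[K] V →ₗ[K] V}
    (hmod : IsAssocColorBimodule 𝒜 𝒱 χ μ α β l r αV βV)
    (hT : IsKupershmidtOperator_s17 𝒜 𝒱 χ μ α β l r αV βV T)
    (h : IsInducedPair 𝒱 χ l r T prec succ) :
    IsBiHomDendriformColor 𝒱 χ prec succ αV βV where
  pl_even _ _ _ hu _ hv := h.prec_mem hmod hT hu hv
  pr_even _ _ _ hu _ hv := h.succ_mem hmod hT hu hv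
  alpha_even := hmod.alphaV_even
  beta_even := hmod.betaV_even
  comm := hmod.commV
  alpha_pl _ _ _ hu _ hv :=
    h.map_prec hmod.alphaV_even hT.map_mem hT.map_alphaV hmod.alphaV_r hu hv
  beta_pl _ _ _ hu _ hv :=
    h.map_prec hmod.betaV_even hT.map_mem hT.map_betaV hmod.betaV_r hu hv
  alpha_pr _ _ _ hu _ hv :=
    h.map_succ hmod.alphaV_even hT.map_mem hT.map_alphaV hmod.alphaV_l hu hv
  beta_pr _ _ _ hu _ hv :=
    h.map_succ hmod.betaV_even hT.map_mem hT.map_betaV hmod.betaV_l hu hv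
  ax1 _ _ _ _ hu _ hv _ hw := h.prec_prec hmod hT hu hv hw
  ax2 _ _ _ _ hu _ hv _ hw := h.succ_prec hmod hT hu hv hw
  ax3 _ _ _ _ hu _ hv _ hw := h.succ_succ hmod hT hu hv hw

end

/-- a Kupershmidt operator on a BiHom-associative color algebra
induces a BiHom-dendriform color algebra structure on the bimodule. -/
theorem kupershmidt_induced_dendriform
    (𝒜 : Γ → Submodule K g) (𝒱 : Γ → Submodule K V) (χ : Bicharacter K Γ)
    (μ : g →ₗ[K] g →ₗ[K] g) (α β : g →ₗ[K] g)
    (l r : g →ₗ[K] V →ₗ[K] V) (αV βV : V →ₗ[K] V)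
    (halg : IsBiHomAssocColor 𝒜 χ μ α β)
    (hmod : IsAssocColorBimodule 𝒜 𝒱 χ μ α β l r αV βV)
    (T : V →ₗ[K] g)
    (hTe : ∀ a, ∀ v ∈ 𝒱 a, T v ∈ 𝒜 a)
    (hTα : ∀ v, T (αV v) = α (T v)) (hTβ : ∀ v, T (βV v) = β (T v))
    (hT : ∀ a b : Γ, ∀ u ∈ 𝒱 a, ∀ v ∈ 𝒱 b,
      μ (T u) (T v) = T (l (T u) v + χ.ε a b • r (T v) u))
    (pl' pr' : V →ₗ[K] V →ₗ[K] V)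
    (hpl' : ∀ a b : Γ, ∀ u ∈ 𝒱 a, ∀ v ∈ 𝒱 b, pl' u v = χ.ε a b • r (T v) u)
    (hpr' : ∀ u v, pr' u v = l (T u) v) :
    IsBiHomDendriformColor 𝒱 χ pl' pr' αV βV :=
  kupershmidt_induced_dendriform_general hmod
    ⟨hTe, hTα, hTβ, fun a b u v hu hv => hT a b u hu v hv⟩
    ⟨fun a b u v hu hv => hpl' a b u hu v hv, fun _ _ u v _ _ => hpr' u v⟩
end

section
/- Let (g, {·,·,·}, ≺, ≻, ε) be a noncommutative 3-pre-Poisson color algebra and let α, β be two even commuting algebra automorphisms of g (bijective, preserving {·,·,·}, ≺ and ≻). Then (g, {·,·,·}_{α,β}, ≺_{α,β}, ≻_{α,β}, ε, α, β) is a noncommutative 3-BiHom-pre-Poisson color algebra, where {x,y,z}_{α,β} = {α(x),α(y),β(z)}, x ≺_{α,β} y = α(x) ≺ β(y), and x ≻_{α,β} y = α(x) ≻ β(y) for all homogeneous x,y,z ∈ g. -/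
variable {K : Type*} [Field K] {Γ : Type*} [AddCommGroup Γ]
variable {g : Type*} [AddCommGroup g] [Module K g]
variable {V : Type*} [AddCommGroup V] [Module K V]

/-!
Write `φ`, `ψ` for the twisting maps. Since they commute with each other and with the structure
maps, and preserve all products, each identity of the twisted algebra is the corresponding identity
of the original one, evaluated at suitable monomials in `φ` and `ψ` applied to the variables. For
instance, the first compatibility condition at `x, y, z, t` is the original one at
`φ²ψ²x, φ²ψ²y, φψz, φψ²t`. Twisting an algebra with structure maps `α`, `β` thus gives one with
structure maps `αφ`, `βψ`, and the theorem is the case `α = β = id`.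
-/

/-- The twist `{φ x, φ y, ψ z}` of a ternary product `{x, y, z}`. -/
def twistBracket (φ ψ : g →ₗ[K] g) (m : g →ₗ[K] g →ₗ[K] g →ₗ[K] g) :
    g →ₗ[K] g →ₗ[K] g →ₗ[K] g :=
  (m.compl₁₂ φ φ).compr₂ (LinearMap.lcomp K g ψ)

@[simp]
theorem twistBracket_apply (φ ψ : g →ₗ[K] g) (m : g →ₗ[K] g →ₗ[K] g →ₗ[K] g) (x y z : g) :
    twistBracket φ ψ m x y z = m (φ x) (φ y) (ψ z) :=
  rfl

/-- A pair of maps `φ`, `ψ` by which an algebra with commuting structure maps `α`, `β` can be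
twisted: they commute with each other and with `α` and `β`. The equations are oriented as rewrite
rules moving `φ`, and then `ψ`, towards the argument. -/
structure IsTwistingPair (α β φ ψ : g → g) : Prop where
  comm : ∀ x, ψ (φ x) = φ (ψ x)
  left_alpha : ∀ x, φ (α x) = α (φ x)
  left_beta : ∀ x, φ (β x) = β (φ x)
  right_alpha : ∀ x, ψ (α x) = α (ψ x)
  right_beta : ∀ x, ψ (β x) = β (ψ x)

section Commutator

variable {χ : Bicharacter K Γ} {m : g →ₗ[K] g →ₗ[K] g →ₗ[K] g} {α β : g ≃ₗ[K] g}

theorem apply_symm_of_apply_comm {φ : g → g} (h : ∀ x, φ (α x) = α (φ x)) (x : g) :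
    φ (α.symm x) = α.symm (φ x) :=
  Function.Semiconj.inverses_right h α.apply_symm_apply α.symm_apply_apply x

theorem map_preC {F : Type*} [FunLike F g g] [LinearMapClass F K g g] {φ : F}
    (hφm : ∀ x y z, φ (m x y z) = m (φ x) (φ y) (φ z))
    (hφα : ∀ x, φ (α x) = α (φ x)) (hφβ : ∀ x, φ (β x) = β (φ x)) (a b c : Γ) (x y z : g) :
    φ (preC χ m α β a b c x y z) = preC χ m α β a b c (φ x) (φ y) (φ z) := by
  simp only [preC, map_add, map_sub, map_smul, hφm, hφα, hφβ, apply_symm_of_apply_comm hφα,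
    apply_symm_of_apply_comm hφβ]

theorem preC_twistBracket {φ ψ : g ≃ₗ[K] g} (hφψ : IsTwistingPair α β φ ψ)
    (a b c : Γ) (x y z : g) :
    preC χ (twistBracket φ ψ m) (φ ≪≫ₗ α) (ψ ≪≫ₗ β) a b c x y z =
      preC χ m α β a b c (φ x) (φ y) (ψ z) := by
  have second (w : g) : φ ((ψ ≪≫ₗ β) ((φ ≪≫ₗ α).symm w)) = β (α.symm (ψ w)) := by
    simp [hφψ.left_beta, apply_symm_of_apply_comm hφψ.comm,
      apply_symm_of_apply_comm hφψ.right_alpha]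
  have third (w : g) : ψ ((φ ≪≫ₗ α) ((ψ ≪≫ₗ β).symm w)) = α (β.symm (φ w)) := by
    simp [hφψ.right_alpha, hφψ.comm, apply_symm_of_apply_comm hφψ.left_beta]
  simp only [preC, twistBracket_apply, LinearEquiv.coe_coe, second, third]

theorem map_preC_twistBracket {φ ψ : g ≃ₗ[K] g} (hφψ : IsTwistingPair α β φ ψ)
    (hφm : ∀ x y z, φ (m x y z) = m (φ x) (φ y) (φ z)) (a b c : Γ) (x y z : g) :
    φ (preC χ (twistBracket φ ψ m) (φ ≪≫ₗ α) (ψ ≪≫ₗ β) a b c x y z) =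
      preC χ m α β a b c (φ (φ x)) (φ (φ y)) (φ (ψ z)) := by
  rw [preC_twistBracket hφψ, map_preC hφm hφψ.left_alpha hφψ.left_beta]

end Commutator

section Twist

variable {𝒜 : Γ → Submodule K g} {χ : Bicharacter K Γ}

theorem Is3BiHomPreLieColor.twist {m : g →ₗ[K] g →ₗ[K] g →ₗ[K] g} {α β φ ψ : g ≃ₗ[K] g}
    (h : Is3BiHomPreLieColor 𝒜 χ m α β) (hφψ : IsTwistingPair α β φ ψ)
    (hφe : ∀ a, Set.MapsTo φ (𝒜 a) (𝒜 a)) (hψe : ∀ a, Set.MapsTo ψ (𝒜 a) (𝒜 a))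
    (hφm : ∀ x y z, φ (m x y z) = m (φ x) (φ y) (φ z))
    (hψm : ∀ x y z, ψ (m x y z) = m (ψ x) (ψ y) (ψ z)) :
    Is3BiHomPreLieColor 𝒜 χ (twistBracket φ ψ m) (φ ≪≫ₗ α) (ψ ≪≫ₗ β) where
  bracket_even a b c x hx y hy z hz :=
    h.bracket_even a b c _ (hφe a hx) _ (hφe b hy) _ (hψe c hz)
  alpha_even a x hx := h.alpha_even a _ (hφe a hx)
  beta_even a x hx := h.beta_even a _ (hψe a hx)
  comm x := by
    simp [h.comm, hφψ.comm, hφψ.left_beta, hφψ.right_alpha]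
  mult_alpha a b c x hx y hy z hz := by
    simpa [hφm, hφψ.left_alpha, hφψ.right_alpha, hφψ.comm] using
      h.mult_alpha a b c _ (hφe a (hφe a hx)) _ (hφe b (hφe b hy)) _ (hφe c (hψe c hz))
  mult_beta a b c x hx y hy z hz := by
    simpa [hψm, hφψ.left_beta, hφψ.right_beta, hφψ.comm] using
      h.mult_beta a b c _ (hφe a (hψe a hx)) _ (hφe b (hψe b hy)) _ (hψe c (hψe c hz))
  skew a b c x hx y hy z hz := by
    simpa [hφψ.left_beta, hφψ.right_alpha, hφψ.comm] using
      h.skew a b c _ (hφe a (hψe a hx)) _ (hφe b (hψe b hy)) _ (hφe c (hψe c hz))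
  identity3 a₁ a₂ a₃ a₄ a₅ x₁ h₁ x₂ h₂ x₃ h₃ x₄ h₄ x₅ h₅ := by
    simpa [map_preC_twistBracket hφψ hφm, hφm, hψm, hφψ.left_alpha, hφψ.left_beta,
      hφψ.right_alpha, hφψ.right_beta, hφψ.comm] using
      h.identity3 a₁ a₂ a₃ a₄ a₅ _ (hφe _ (hψe _ h₁)) _ (hφe _ (hψe _ h₂))
        _ (hψe _ (hψe _ h₃)) _ (hφe _ (hφe _ (hψe _ h₄))) _ (hφe _ (hφe _ (hψe _ h₅)))
  identity4 a₁ a₂ a₃ a₄ a₅ x₁ h₁ x₂ h₂ x₃ h₃ x₄ h₄ x₅ h₅ := by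
    simpa [map_preC_twistBracket hφψ hφm, hφm, hψm, hφψ.left_alpha, hφψ.left_beta,
      hφψ.right_alpha, hφψ.right_beta, hφψ.comm] using
      h.identity4 a₁ a₂ a₃ a₄ a₅ _ (hφe _ (hψe _ h₁)) _ (hφe _ (hψe _ h₂))
        _ (hψe _ (hψe _ h₃)) _ (hφe _ (hφe _ (hψe _ h₄))) _ (hφe _ (hφe _ (hψe _ h₅)))

theorem IsBiHomDendriformColor.twist {pl pr : g →ₗ[K] g →ₗ[K] g} {α β φ ψ : g →ₗ[K] g}
    (h : IsBiHomDendriformColor 𝒜 χ pl pr α β) (hφψ : IsTwistingPair α β φ ψ)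
    (hφe : ∀ a, Set.MapsTo φ (𝒜 a) (𝒜 a)) (hψe : ∀ a, Set.MapsTo ψ (𝒜 a) (𝒜 a))
    (hφl : ∀ x y, φ (pl x y) = pl (φ x) (φ y)) (hψl : ∀ x y, ψ (pl x y) = pl (ψ x) (ψ y))
    (hφr : ∀ x y, φ (pr x y) = pr (φ x) (φ y)) (hψr : ∀ x y, ψ (pr x y) = pr (ψ x) (ψ y)) :
    IsBiHomDendriformColor 𝒜 χ (pl.compl₁₂ φ ψ) (pr.compl₁₂ φ ψ) (α ∘ₗ φ) (β ∘ₗ ψ) where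
  pl_even a b x hx y hy := h.pl_even a b _ (hφe a hx) _ (hψe b hy)
  pr_even a b x hx y hy := h.pr_even a b _ (hφe a hx) _ (hψe b hy)
  alpha_even a x hx := h.alpha_even a _ (hφe a hx)
  beta_even a x hx := h.beta_even a _ (hψe a hx)
  comm x := by
    simp [h.comm, hφψ.comm, hφψ.left_beta, hφψ.right_alpha]
  alpha_pl a b x hx y hy := by
    simpa [hφl, hφψ.left_alpha, hφψ.right_alpha, hφψ.comm] using
      h.alpha_pl a b _ (hφe a (hφe a hx)) _ (hφe b (hψe b hy))
  beta_pl a b x hx y hy := by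
    simpa [hψl, hφψ.left_beta, hφψ.right_beta, hφψ.comm] using
      h.beta_pl a b _ (hφe a (hψe a hx)) _ (hψe b (hψe b hy))
  alpha_pr a b x hx y hy := by
    simpa [hφr, hφψ.left_alpha, hφψ.right_alpha, hφψ.comm] using
      h.alpha_pr a b _ (hφe a (hφe a hx)) _ (hφe b (hψe b hy))
  beta_pr a b x hx y hy := by
    simpa [hψr, hφψ.left_beta, hφψ.right_beta, hφψ.comm] using
      h.beta_pr a b _ (hφe a (hψe a hx)) _ (hψe b (hψe b hy))
  ax1 a b c x hx y hy z hz := by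
    simpa [hφl, hψl, hψr, hφψ.left_alpha, hφψ.right_beta, hφψ.comm] using
      h.ax1 a b c _ (hφe a (hφe a hx)) _ (hφe b (hψe b hy)) _ (hψe c (hψe c hz))
  ax2 a b c x hx y hy z hz := by
    simpa [hφr, hψl, hφψ.left_alpha, hφψ.right_beta, hφψ.comm] using
      h.ax2 a b c _ (hφe a (hφe a hx)) _ (hφe b (hψe b hy)) _ (hψe c (hψe c hz))
  ax3 a b c x hx y hy z hz := by
    simpa [hφl, hφr, hψr, hφψ.left_alpha, hφψ.right_beta, hφψ.comm] using
      h.ax3 a b c _ (hφe a (hφe a hx)) _ (hφe b (hψe b hy)) _ (hψe c (hψe c hz))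

theorem twist_nc3PrePoisson_general {m : g →ₗ[K] g →ₗ[K] g →ₗ[K] g}
    {pl pr : g →ₗ[K] g →ₗ[K] g} {α β φ ψ : g ≃ₗ[K] g}
    (h : IsNC3BiHomPrePoissonColor 𝒜 χ m pl pr α β) (hφψ : IsTwistingPair α β φ ψ)
    (hφe : ∀ a, Set.MapsTo φ (𝒜 a) (𝒜 a)) (hψe : ∀ a, Set.MapsTo ψ (𝒜 a) (𝒜 a))
    (hφm : ∀ x y z, φ (m x y z) = m (φ x) (φ y) (φ z))
    (hψm : ∀ x y z, ψ (m x y z) = m (ψ x) (ψ y) (ψ z))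
    (hφl : ∀ x y, φ (pl x y) = pl (φ x) (φ y)) (hψl : ∀ x y, ψ (pl x y) = pl (ψ x) (ψ y))
    (hφr : ∀ x y, φ (pr x y) = pr (φ x) (φ y)) (hψr : ∀ x y, ψ (pr x y) = pr (ψ x) (ψ y)) :
    IsNC3BiHomPrePoissonColor 𝒜 χ (twistBracket φ ψ m)
      (pl.compl₁₂ (φ : g →ₗ[K] g) (ψ : g →ₗ[K] g)) (pr.compl₁₂ (φ : g →ₗ[K] g) (ψ : g →ₗ[K] g))
      (φ ≪≫ₗ α) (ψ ≪≫ₗ β) where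
  prelie := h.prelie.twist hφψ hφe hψe hφm hψm
  dend := h.dend.twist hφψ hφe hψe hφl hψl hφr hψr
  comp1 a b c d x hx y hy z hz t ht := by
    simpa [hφm, hψm, hψl, hφψ.left_alpha, hφψ.left_beta, hφψ.right_alpha, hφψ.right_beta,
      hφψ.comm] using
      h.comp1 a b c d _ (hφe a (hφe a (hψe a (hψe a hx))))
        _ (hφe b (hφe b (hψe b (hψe b hy)))) _ (hφe c (hψe c hz)) _ (hφe d (hψe d (hψe d ht)))
  comp2 a b c d x hx y hy z hz t ht := by
    simpa [hφm, hψm, hψr, hφψ.left_alpha, hφψ.left_beta, hφψ.right_alpha, hφψ.right_beta,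
      hφψ.comm] using
      h.comp2 a b c d _ (hφe a (hφe a (hψe a hx))) _ (hφe b (hφe b (hφe b (hψe b hy))))
        _ (hφe c (hφe c (hψe c hz))) _ (hψe d (hψe d ht))
  comp3 a b c d x hx y hy z hz t ht := by
    simpa [hφm, hψm, hφl, hψl, hφr, hψr, hφψ.left_alpha, hφψ.left_beta, hφψ.right_alpha,
      hφψ.right_beta, hφψ.comm] using
      h.comp3 a b c d _ (hφe a (hφe a (hψe a hx))) _ (hφe b (hφe b (hψe b hy)))
        _ (hφe c (hψe c (hψe c hz))) _ (hφe d (hφe d (hψe d (hψe d ht))))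

end Twist

/-- twisting a noncommutative 3-pre-Poisson color algebra by two
even commuting algebra automorphisms yields a noncommutative
3-BiHom-pre-Poisson color algebra. -/
theorem twist_nc3PrePoisson
    (𝒜 : Γ → Submodule K g) (χ : Bicharacter K Γ)
    (m : g →ₗ[K] g →ₗ[K] g →ₗ[K] g) (pl pr : g →ₗ[K] g →ₗ[K] g)
    (h : IsNC3BiHomPrePoissonColor 𝒜 χ m pl pr
      (LinearEquiv.refl K g) (LinearEquiv.refl K g))
    (α β : g ≃ₗ[K] g)
    (hαe : ∀ a, ∀ x ∈ 𝒜 a, α x ∈ 𝒜 a) (hβe : ∀ a, ∀ x ∈ 𝒜 a, β x ∈ 𝒜 a)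
    (hcomm : ∀ x, α (β x) = β (α x))
    (hαm : ∀ x y z, α (m x y z) = m (α x) (α y) (α z))
    (hβm : ∀ x y z, β (m x y z) = m (β x) (β y) (β z))
    (hαl : ∀ x y, α (pl x y) = pl (α x) (α y))
    (hβl : ∀ x y, β (pl x y) = pl (β x) (β y))
    (hαr : ∀ x y, α (pr x y) = pr (α x) (α y))
    (hβr : ∀ x y, β (pr x y) = pr (β x) (β y))
    (m' : g →ₗ[K] g →ₗ[K] g →ₗ[K] g)
    (hm' : ∀ x y z, m' x y z = m (α x) (α y) (β z))
    (pl' pr' : g →ₗ[K] g →ₗ[K] g)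
    (hpl' : ∀ x y, pl' x y = pl (α x) (β y))
    (hpr' : ∀ x y, pr' x y = pr (α x) (β y)) :
    IsNC3BiHomPrePoissonColor 𝒜 χ m' pl' pr' α β := by
  obtain rfl : m' = twistBracket α β m := LinearMap.ext₂ fun x y => LinearMap.ext (hm' x y)
  obtain rfl : pl' = pl.compl₁₂ (α : g →ₗ[K] g) (β : g →ₗ[K] g) := LinearMap.ext₂ hpl'
  obtain rfl : pr' = pr.compl₁₂ (α : g →ₗ[K] g) (β : g →ₗ[K] g) := LinearMap.ext₂ hpr'
  have hαβ : IsTwistingPair (LinearEquiv.refl K g) (LinearEquiv.refl K g) α β :=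
    ⟨fun x => (hcomm x).symm, fun _ => rfl, fun _ => rfl, fun _ => rfl, fun _ => rfl⟩
  exact twist_nc3PrePoisson_general h hαβ hαe hβe hαm hβm hαl hβl hαr hβr
end
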